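/- Let X be a complex Hilbert space and A = (A₁, A₂) a pair of bounded linear operators on X. Suppose A is simultaneously similar to some pair T = (T₁, T₂) belonging to the class C_{1,2}, i.e. there are a complex Hilbert space Y, a pair T ∈ C_{1,2} of bounded operators on Y, and a boundedly invertible operator S : X → Y with A_k = S^{−1} T_k S for k = 1, 2. Then there exists M > 0 such that ‖[(A₁+A₂)(A₁−A₂)]ⁿ‖ ≤ M for all integers n ≥ 1. -/

import Mathlib

open ContinuousLinearMap

noncomputable section

/-- A continuous linear operator on a complex Hilbert space is unitary. -/
def IsUnitaryOp {Y : Type*} [NormedAddCommGroup Y] [InnerProductSpace ℂ Y] [CompleteSpace Y]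
    (T : Y →L[ℂ] Y) : Prop :=
  T ∘L adjoint T = 1 ∧ adjoint T ∘L T = 1

/-- A unitary `ρ`-dilation of an `N`-tuple of bounded operators on a complex Hilbert space `X`:
a complex Hilbert space `Y`, a linear isometry `ι : X → Y`, and an `N`-tuple `At` of operators
on `Y` such that every unimodular combination `ζ₁At₁ + ⋯ + ζ_N At_N` is unitary, and
`(z₁A₁ + ⋯ + z_N A_N)ⁿ = ρ · ι* ∘ (z₁At₁ + ⋯ + z_N At_N)ⁿ ∘ ι` for all `z ∈ ℂ^N` and `n ≥ 1`. -/
structure UnitaryRhoDilation (N : ℕ) (ρ : ℝ) (X : Type*) [NormedAddCommGroup X]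
    [InnerProductSpace ℂ X] [CompleteSpace X] (A : Fin N → X →L[ℂ] X) where
  Y : Type
  [instN : NormedAddCommGroup Y]
  [instI : InnerProductSpace ℂ Y]
  [instC : CompleteSpace Y]
  ι : X →L[ℂ] Y
  isom : Isometry ι
  At : Fin N → Y →L[ℂ] Y
  unit : ∀ ζ : Fin N → ℂ, (∀ k, ‖ζ k‖ = 1) → IsUnitaryOp (∑ k, ζ k • At k)
  dil : ∀ (z : Fin N → ℂ) (n : ℕ), 1 ≤ n →
    (∑ k, z k • A k) ^ n = (ρ : ℂ) • (adjoint ι ∘L (((∑ k, z k • At k) ^ n) ∘L ι))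

/-- The class `C_{ρ,N}`: `N`-tuples of bounded operators admitting a unitary `ρ`-dilation. -/
def MemC (N : ℕ) (ρ : ℝ) {X : Type*} [NormedAddCommGroup X] [InnerProductSpace ℂ X]
    [CompleteSpace X] (A : Fin N → X →L[ℂ] X) : Prop :=
  Nonempty (UnitaryRhoDilation N ρ X A)

/-- A unimodular combination of a tuple of class `C_{1,N}` is a contraction. -/
theorem MemC.norm_comb_le_one {N : ℕ} {X : Type*} [NormedAddCommGroup X]
    [InnerProductSpace ℂ X] [CompleteSpace X] {A : Fin N → X →L[ℂ] X} (h : MemC N 1 A)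
    (ζ : Fin N → ℂ) (hζ : ∀ k, ‖ζ k‖ = 1) : ‖∑ k, ζ k • A k‖ ≤ 1 := by
  obtain ⟨d⟩ := h
  letI := d.instN
  letI := d.instI
  letI := d.instC
  have hd := d.dil ζ 1 le_rfl
  simp only [pow_one, Complex.ofReal_one, one_smul] at hd
  rw [hd]
  have hι : ‖d.ι‖ ≤ 1 := ContinuousLinearMap.opNorm_le_bound _ zero_le_one (fun x => by
    rw [one_mul]
    exact (AddMonoidHomClass.isometry_iff_norm d.ι).1 d.isom x |>.le)
  have hι' : ‖adjoint d.ι‖ ≤ 1 := by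
    rw [LinearIsometryEquiv.norm_map]; exact hι
  have hu := (d.unit ζ hζ).2
  have hU : ‖∑ k, ζ k • d.At k‖ ≤ 1 := by
    refine ContinuousLinearMap.opNorm_le_bound _ zero_le_one (fun y => ?_)
    rw [one_mul]
    exact ((ContinuousLinearMap.norm_map_iff_adjoint_comp_self _).2 hu y).le
  calc _ ≤ ‖adjoint d.ι‖ * ‖(∑ k, ζ k • d.At k) ∘L d.ι‖ := opNorm_comp_le _ _
    _ ≤ 1 * (1 * 1) := by
      gcongr
      exact (opNorm_comp_le _ _).trans (by gcongr)
    _ = 1 := by norm_num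

/-- if a pair `A = (A₁, A₂)` of operators on `X` is simultaneously similar to
some pair `T ∈ C_{1,2}`, then the powers `[(A₁+A₂)(A₁−A₂)]ⁿ` are uniformly bounded in norm. -/
theorem bounded_powers_of_similar_to_C1 {X : Type*} [NormedAddCommGroup X]
    [InnerProductSpace ℂ X] [CompleteSpace X] (A : Fin 2 → X →L[ℂ] X)
    {Y : Type*} [NormedAddCommGroup Y] [InnerProductSpace ℂ Y] [CompleteSpace Y]
    (T : Fin 2 → Y →L[ℂ] Y) (hT : MemC 2 1 T) (S : X ≃L[ℂ] Y)
    (hS : ∀ k, A k = (S.symm : Y →L[ℂ] X) ∘L (T k ∘L (S : X →L[ℂ] Y))) :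
    ∃ M : ℝ, 0 < M ∧ ∀ n : ℕ, 1 ≤ n → ‖((A 0 + A 1) ∘L (A 0 - A 1)) ^ n‖ ≤ M := by
  have h1 : ‖T 0 + T 1‖ ≤ 1 := by
    have := hT.norm_comb_le_one ![1, 1] (by intro k; fin_cases k <;> simp)
    simpa [Fin.sum_univ_two] using this
  have h2 : ‖T 0 - T 1‖ ≤ 1 := by
    have := hT.norm_comb_le_one ![1, -1] (by intro k; fin_cases k <;> simp)
    simpa [Fin.sum_univ_two, sub_eq_add_neg] using this
  set B : Y →L[ℂ] Y := (T 0 + T 1) ∘L (T 0 - T 1) with hB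
  have hB1 : ‖B‖ ≤ 1 := (opNorm_comp_le _ _).trans (mul_le_one₀ h1 (norm_nonneg _) h2)
  have key : ∀ n : ℕ, ((A 0 + A 1) ∘L (A 0 - A 1)) ^ n =
      (S.symm : Y →L[ℂ] X) ∘L ((B ^ n) ∘L (S : X →L[ℂ] Y)) := by
    intro n
    induction n with
    | zero => ext x; simp
    | succ n ih =>
      rw [pow_succ, ih, pow_succ]
      ext x
      simp [hS, hB]
  refine ⟨‖(S.symm : Y →L[ℂ] X)‖ * ‖(S : X →L[ℂ] Y)‖ + 1, by positivity, fun n hn => ?_⟩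
  have hBn : ‖B ^ n‖ ≤ 1 :=
    (norm_pow_le' B (by omega)).trans (pow_le_one₀ (norm_nonneg _) hB1)
  rw [key n]
  calc _ ≤ ‖(S.symm : Y →L[ℂ] X)‖ * ‖(B ^ n) ∘L (S : X →L[ℂ] Y)‖ := opNorm_comp_le _ _
    _ ≤ ‖(S.symm : Y →L[ℂ] X)‖ * (1 * ‖(S : X →L[ℂ] Y)‖) := by
      gcongr
      exact (opNorm_comp_le _ _).trans (by gcongr)
    _ ≤ _ := by linarith
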